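/- Let p be a prime number. There exist a field K of characteristic p, a Henselian valuation ring A with field of fractions K which is not a field and whose value group Kˣ/Aˣ is isomorphic to a nonzero subgroup of ℝ not isomorphic to ℤ, a nonzero element b of the maximal ideal m_A of A, and cyclic Galois extensions L₁ and L₂ of K of degree p, such that the ideal H₁ of A associated to L₁/K equals the principal ideal b^p·A and the ideal H₂ of A associated to L₂/K equals the (non-principal) ideal b^p·m_A. -/

import Mathlib

set_option synthInstance.maxHeartbeats 400000

/-- `H` is the ideal of `A` associated to a cyclic extension `L/K` of prime degree:
for any generator `σ` of `Gal(L/K)`, `H` is generated by the elements `a` of `A` whose image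
in `K` is the norm of an element of the ideal `J_σ` of the integral closure `B` of `A` in `L`
generated by the elements `σ(x)·x⁻¹ − 1`, `x ∈ Lˣ`. -/
def IsAssociatedIdeal {K : Type} [Field K] (A : ValuationSubring K)
    (L : Type) [Field L] [Algebra K L] (H : Ideal ↥A) : Prop :=
  ∀ [instAL : Algebra ↥A L] [instTower : IsScalarTower ↥A K L] (σ : L ≃ₐ[K] L),
    (∀ τ : L ≃ₐ[K] L, τ ∈ Subgroup.zpowers σ) →
    H = Ideal.span {a : ↥A |
      ∃ b ∈ Ideal.span {b : ↥(integralClosure ↥A L) |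
          ∃ x : Lˣ, (b : L) = σ (x : L) * (x : L)⁻¹ - 1},
        algebraMap ↥A K a = Algebra.norm K ((b : L))}

/-- `L/K` is a cyclic Galois extension of degree `p`. -/
def IsCyclicOfDegree (K : Type) [Field K] (L : Type) [Field L] [Algebra K L] (p : ℕ) : Prop :=
  IsGalois K L ∧ FiniteDimensional K L ∧ IsCyclic (L ≃ₐ[K] L) ∧ Nat.card (L ≃ₐ[K] L) = p

/-!
Let `K` be a complete ultrametric field of characteristic `p` and write `℘(x) = x ^ p - x`. For the
extension of `K` generated by a root of `℘(X) = f`, averaging the conjugates of an element, whose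
number is prime to `p` when its degree is less than `p`, shows that the associated ideal is
`{a | ∃ g : K, ‖a‖ * ‖f - ℘(g)‖ ≤ 1}`. It is therefore principal or not according to whether the
infimum of `‖f - ℘(g)‖` over `g` is attained.

Both behaviours occur over the completion `K` of a field `E` of Hahn series killed by almost all of
a sequence of derivations. Every series `w` has `w ^ p ∈ E`, and if `‖w - g‖ > 1` and
`‖w - g‖ ^ p > ‖w‖` for all `g ∈ E`, then `f = w ^ p` gives `‖f - ℘(g)‖ = ‖w - g‖ ^ p`, so the
question becomes whether the distance from `w` to `E` is attained. It is attained at `0` when `w` is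
a monomial moved by a derivation which kills `E`. It is not attained when `w` is a sum of monomials
moved by different derivations, with norms decreasing strictly to the distance.
-/

section ArtinSchreierMap

/-- The Artin–Schreier map `℘(x) = x ^ p - x`, which is additive in characteristic `p`. -/
def artinSchreier {R : Type*} [Ring R] (p : ℕ) (x : R) : R := x ^ p - x

lemma map_artinSchreier {R S : Type*} [Ring R] [Ring S] (p : ℕ) (φ : R →+* S) (x : R) :
    φ (artinSchreier p x) = artinSchreier p (φ x) := by
  simp only [artinSchreier, map_sub, map_pow]

lemma artinSchreier_sub {R : Type*} [CommRing R] (p : ℕ) [Fact p.Prime] [CharP R p] (x y : R) :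
    artinSchreier p (x - y) = artinSchreier p x - artinSchreier p y := by
  simp only [artinSchreier, sub_pow_char]
  ring

lemma exists_artinSchreier_eq {k : Type*} [Field k] [IsAlgClosed k] {p : ℕ} (hp : 1 < p) (y : k) :
    ∃ x : k, artinSchreier p x = y := by
  have hdeg : (Polynomial.X + Polynomial.C y).degree < (p : WithBot ℕ) := by
    rw [Polynomial.degree_X_add_C]
    exact_mod_cast hp
  obtain ⟨x, hx⟩ := IsAlgClosed.exists_root (Polynomial.X ^ p - (Polynomial.X + Polynomial.C y))
    (by
      rw [Polynomial.degree_sub_eq_left_of_degree_lt (by rwa [Polynomial.degree_X_pow]),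
        Polynomial.degree_X_pow]
      exact_mod_cast (by lia : p ≠ 0))
  refine ⟨x, ?_⟩
  simp only [Polynomial.IsRoot.def, Polynomial.eval_sub, Polynomial.eval_add,
    Polynomial.eval_pow, Polynomial.eval_X, Polynomial.eval_C] at hx
  rw [artinSchreier]
  linear_combination hx

end ArtinSchreierMap

section NormedFieldCharP

variable {F : Type*} [NormedField F]

lemma norm_eq_one_of_pow_eq_self {n : ℕ} (hn : 1 < n) {x : F} (hx : x ≠ 0) (h : x ^ n = x) :
    ‖x‖ = 1 := by
  have hpow : x ^ (n - 1) = 1 := by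
    apply mul_right_cancel₀ hx
    rw [← pow_succ, Nat.sub_add_cancel hn.le, h, one_mul]
  refine (pow_eq_one_iff_of_nonneg (norm_nonneg x) (by lia : n - 1 ≠ 0)).1 ?_
  rw [← norm_pow, hpow, norm_one]

lemma norm_le_one_of_pow_eq_self {n : ℕ} (hn : 1 < n) {x : F} (h : x ^ n = x) : ‖x‖ ≤ 1 := by
  rcases eq_or_ne x 0 with rfl | hx
  · simp only [norm_zero, zero_le_one]
  · exact (norm_eq_one_of_pow_eq_self hn hx h).le

lemma natCast_pow_char_eq_self {R : Type*} [CommSemiring R] (p : ℕ) [Fact p.Prime] [CharP R p]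
    (n : ℕ) : (n : R) ^ p = n := by
  rw [← frobenius_def, map_natCast]

variable (F) in
lemma isUltrametricDist_of_charP (p : ℕ) [hp : Fact p.Prime] [CharP F p] : IsUltrametricDist F :=
  isUltrametricDist_iff_forall_norm_natCast_le_one.2 fun n ↦
    norm_le_one_of_pow_eq_self hp.out.one_lt (natCast_pow_char_eq_self p n)

variable {p : ℕ} [hp : Fact p.Prime] [CharP F p]

lemma norm_artinSchreier_of_one_lt {x : F} (hx : 1 < ‖x‖) : ‖artinSchreier p x‖ = ‖x‖ ^ p := by
  have := isUltrametricDist_of_charP F p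
  have hlt : ‖-x‖ < ‖x ^ p‖ := by
    rw [norm_neg, norm_pow]
    exact lt_self_pow₀ hx hp.out.one_lt
  rw [artinSchreier, sub_eq_add_neg, IsUltrametricDist.norm_add_eq_max_of_norm_ne_norm hlt.ne',
    max_eq_left hlt.le, norm_pow]

lemma norm_artinSchreier_le_one {x : F} (hx : ‖x‖ ≤ 1) : ‖artinSchreier p x‖ ≤ 1 := by
  have := isUltrametricDist_of_charP F p
  rw [artinSchreier, sub_eq_add_neg]
  refine (IsUltrametricDist.norm_add_le_max _ _).trans (max_le ?_ (by rwa [norm_neg]))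
  rw [norm_pow]
  exact pow_le_one₀ (norm_nonneg x) hx

lemma one_lt_norm_of_one_lt_norm_artinSchreier {x : F} (hx : 1 < ‖artinSchreier p x‖) :
    1 < ‖x‖ := by
  contrapose! hx
  exact norm_artinSchreier_le_one hx

/-- The norms of the elements of the class of `f` modulo the image of the Artin–Schreier map;
they govern the ramification of the extension defined by `X ^ p - X = f`. -/
def artinSchreierNorms (p : ℕ) (f : F) : Set ℝ := Set.range fun g ↦ ‖f - artinSchreier p g‖

lemma norm_sub_artinSchreier {f w g : F} (hwg : 1 < ‖w - g‖)
    (hfw : ‖f - artinSchreier p w‖ < ‖w - g‖ ^ p) :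
    ‖f - artinSchreier p g‖ = ‖w - g‖ ^ p := by
  have := isUltrametricDist_of_charP F p
  have hsplit : f - artinSchreier p g = artinSchreier p (w - g) + (f - artinSchreier p w) := by
    rw [artinSchreier_sub]
    ring
  rw [← norm_artinSchreier_of_one_lt hwg] at hfw ⊢
  rw [hsplit, IsUltrametricDist.norm_add_eq_max_of_norm_ne_norm hfw.ne', max_eq_left hfw.le]

lemma artinSchreierNorms_coe_completion {f : F} (hf : ∀ r ∈ artinSchreierNorms p f, 1 < r) :
    artinSchreierNorms p (f : UniformSpace.Completion F) = artinSchreierNorms p f := by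
  have := isUltrametricDist_of_charP F p
  let ι : F →+* UniformSpace.Completion F := UniformSpace.Completion.coeRingHom
  have hι : ∀ x, ‖ι x‖ = ‖x‖ := UniformSpace.Completion.norm_coe
  have : CharP (UniformSpace.Completion F) p := charP_of_injective_ringHom ι.injective p
  have := isUltrametricDist_of_charP (UniformSpace.Completion F) p
  have hcoe (g : F) : ‖ι f - artinSchreier p (ι g)‖ = ‖f - artinSchreier p g‖ := by
    rw [← map_artinSchreier, ← map_sub, hι]
  refine subset_antisymm ?_ ?_
  · rintro _ ⟨g', rfl⟩
    obtain ⟨g, hg⟩ : ∃ g : F, ‖ι g - g'‖ < 1 := by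
      obtain ⟨g, hg⟩ := UniformSpace.Completion.denseRange_coe.exists_dist_lt g' one_pos
      exact ⟨g, by rwa [← dist_eq_norm, dist_comm]⟩
    have hlt : ‖artinSchreier p (ι g - g')‖ < ‖ι f - artinSchreier p (ι g)‖ :=
      (norm_artinSchreier_le_one hg.le).trans_lt (hcoe g ▸ hf _ ⟨g, rfl⟩)
    refine ⟨g, ?_⟩
    have hsplit : ι f - artinSchreier p g' =
        (ι f - artinSchreier p (ι g)) + artinSchreier p (ι g - g') := by
      rw [artinSchreier_sub]
      ring
    change ‖f - artinSchreier p g‖ = ‖ι f - artinSchreier p g'‖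
    rw [hsplit, IsUltrametricDist.norm_add_eq_max_of_norm_ne_norm hlt.ne', max_eq_left hlt.le, hcoe]
  · rintro _ ⟨g, rfl⟩
    exact ⟨ι g, hcoe g⟩

end NormedFieldCharP

section ValuationRing

open Filter Topology

variable {K : Type*} [NormedField K] [IsUltrametricDist K]

variable (K) in
/-- The closed unit ball of an ultrametric normed field, as a valuation ring. -/
noncomputable def normValuationSubring : ValuationSubring K :=
  (NormedField.valuation (K := K)).valuationSubring

lemma mem_normValuationSubring {x : K} : x ∈ normValuationSubring K ↔ ‖x‖ ≤ 1 :=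
  Iff.rfl

lemma normValuationSubring_dvd_iff {c x : normValuationSubring K} :
    c ∣ x ↔ ‖(x : K)‖ ≤ ‖(c : K)‖ :=
  (Valuation.valuationSubring.integers NormedField.valuation).dvd_iff_le

lemma normValuationSubring_isUnit_iff {x : normValuationSubring K} : IsUnit x ↔ ‖(x : K)‖ = 1 :=
  (Valuation.valuationSubring.integers NormedField.valuation).isUnit_iff_valuation_eq_one.trans
    NNReal.coe_inj.symm

lemma mem_maximalIdeal_normValuationSubring {x : normValuationSubring K} :
    x ∈ IsLocalRing.maximalIdeal (normValuationSubring K) ↔ ‖(x : K)‖ < 1 := by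
  rw [IsLocalRing.mem_maximalIdeal, mem_nonunits_iff, normValuationSubring_isUnit_iff,
    (mem_normValuationSubring.1 x.2).lt_iff_ne]

lemma mem_span_singleton_mul_maximalIdeal {c a : normValuationSubring K} (hc : c ≠ 0) :
    a ∈ Ideal.span {c} * IsLocalRing.maximalIdeal (normValuationSubring K) ↔
      ‖(a : K)‖ < ‖(c : K)‖ := by
  have hc' : 0 < ‖(c : K)‖ := norm_pos_iff.2 (by exact_mod_cast hc)
  rw [Ideal.mem_span_singleton_mul]
  constructor
  · rintro ⟨z, hz, rfl⟩
    rw [MulMemClass.coe_mul, norm_mul]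
    exact mul_lt_of_lt_one_right hc' (mem_maximalIdeal_normValuationSubring.1 hz)
  · intro hac
    obtain ⟨z, rfl⟩ := normValuationSubring_dvd_iff.2 hac.le
    rw [MulMemClass.coe_mul, norm_mul] at hac
    exact ⟨z, mem_maximalIdeal_normValuationSubring.2 (by simpa [hc'] using hac), rfl⟩

section Henselian

lemma smodEq_span_singleton_pow_iff {c x y : normValuationSubring K} {n : ℕ} :
    x ≡ y [SMOD (Ideal.span {c} ^ n • ⊤ : Submodule (normValuationSubring K) _)] ↔
      ‖(x : K) - y‖ ≤ ‖(c : K)‖ ^ n := by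
  rw [SModEq.sub_mem, smul_eq_mul, Ideal.mul_top, Ideal.span_singleton_pow,
    Ideal.mem_span_singleton, normValuationSubring_dvd_iff, ← norm_pow]
  rfl

lemma isAdicComplete_span_singleton [CompleteSpace K] {c : normValuationSubring K}
    (hc : ‖(c : K)‖ < 1) : IsAdicComplete (Ideal.span {c}) (normValuationSubring K) := by
  have hlim : Tendsto (fun n : ℕ ↦ ‖(c : K)‖ ^ n) atTop (𝓝 0) :=
    tendsto_pow_atTop_nhds_zero_of_lt_one (norm_nonneg _) hc
  refine { haus' := fun x hx ↦ ?_, prec' := fun f hf ↦ ?_ }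
  · have hx0 : ‖(x : K)‖ ≤ 0 := ge_of_tendsto' hlim fun n ↦ by
      simpa using smodEq_span_singleton_pow_iff.1 (hx n)
    exact_mod_cast norm_le_zero_iff.1 hx0
  · have hf' {m n : ℕ} (h : m ≤ n) : ‖(f m : K) - f n‖ ≤ ‖(c : K)‖ ^ m :=
      smodEq_span_singleton_pow_iff.1 (hf h)
    have hcauchy : CauchySeq fun n ↦ (f n : K) := by
      refine cauchySeq_of_le_geometric ‖(c : K)‖ 1 hc fun n ↦ ?_
      rw [one_mul, dist_eq_norm]
      exact hf' n.le_succ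
    obtain ⟨L, hL⟩ := cauchySeq_tendsto_of_complete hcauchy
    have hL1 : ‖L‖ ≤ 1 := le_of_tendsto' hL.norm fun n ↦ mem_normValuationSubring.1 (f n).2
    refine ⟨⟨L, hL1⟩, fun n ↦ smodEq_span_singleton_pow_iff.2 ?_⟩
    exact le_of_tendsto (hL.const_sub _).norm ((eventually_ge_atTop n).mono fun m hm ↦ hf' hm)

instance henselianLocalRing_normValuationSubring [CompleteSpace K] :
    HenselianLocalRing (normValuationSubring K) where
  is_henselian P hP a₀ h₀ hunit := by
    have := isAdicComplete_span_singleton (mem_maximalIdeal_normValuationSubring.1 h₀)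
    obtain ⟨a, ha, haa₀⟩ := HenselianRing.is_henselian (I := Ideal.span {P.eval a₀}) P hP a₀
      (Ideal.mem_span_singleton_self _) (hunit.map _)
    exact ⟨a, ha, (Ideal.span_singleton_le_iff_mem _).2 h₀ haa₀⟩

end Henselian

section ValueGroup

/-- `x ↦ log ‖x‖` on the units of a normed field. -/
noncomputable def logNorm (F : Type*) [NormedField F] : Fˣ →* Multiplicative ℝ where
  toFun x := .ofAdd (Real.log ‖(x : F)‖)
  map_one' := by simp
  map_mul' x y := by
    rw [Units.val_mul, norm_mul, Real.log_mul (norm_ne_zero_iff.2 x.ne_zero)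
      (norm_ne_zero_iff.2 y.ne_zero), ofAdd_add]

lemma ker_logNorm : (logNorm K).ker = (normValuationSubring K).unitGroup := by
  ext x
  have hx : 0 < ‖(x : K)‖ := norm_pos_iff.2 x.ne_zero
  have hmem : x ∈ (normValuationSubring K).unitGroup ↔ ‖(x : K)‖ = 1 :=
    (Valuation.mem_unitGroup_iff K NormedField.valuation x).trans NNReal.coe_inj.symm
  rw [hmem, MonoidHom.mem_ker]
  constructor
  · exact Real.eq_one_of_pos_of_log_eq_zero hx
  · intro h
    simp [logNorm, h]

lemma logNorm_surjective {F : Type*} [NormedField F] (hF : ∀ r > 0, ∃ x : F, ‖x‖ = r) :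
    Function.Surjective (logNorm F) := by
  intro r
  obtain ⟨x, hx⟩ := hF (Real.exp r.toAdd) (Real.exp_pos _)
  have hx0 : x ≠ 0 := norm_ne_zero_iff.1 (hx ▸ (Real.exp_pos _).ne')
  refine ⟨Units.mk0 x hx0, congrArg Multiplicative.ofAdd ?_⟩
  exact (congrArg Real.log hx).trans (Real.log_exp _)

lemma nonempty_quotient_unitGroup_mulEquiv (hK : ∀ r > 0, ∃ x : K, ‖x‖ = r) :
    Nonempty ((Kˣ ⧸ (normValuationSubring K).unitGroup) ≃* Multiplicative (⊤ : AddSubgroup ℝ)) :=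
  ⟨(QuotientGroup.quotientMulEquivOfEq ker_logNorm.symm).trans <|
    (QuotientGroup.quotientKerEquivOfSurjective _ (logNorm_surjective hK)).trans
      AddSubgroup.topEquiv.symm.toMultiplicative⟩

lemma isEmpty_addEquiv_int_of_divisible {G : Type*} [AddCommGroup G]
    (hG : ∀ x : G, ∃ y, y + y = x) : IsEmpty (G ≃+ ℤ) := by
  refine ⟨fun e ↦ ?_⟩
  obtain ⟨y, hy⟩ := hG (e.symm 1)
  have h1 : e y + e y = 1 := by rw [← map_add, hy, e.apply_symm_apply]
  lia

end ValueGroup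

end ValuationRing

section Denominators

variable {F ι : Type*} [NormedField F] [IsUltrametricDist F] [Nonempty ι]

/-- The elements `x` such that `‖x * y i‖ ≤ 1` for some `i`, that is, the union of the fractional
ideals generated by the `(y i)⁻¹`. It is everything if some `y i` vanishes. -/
def denominators (y : ι → F) : AddSubmonoid F where
  carrier := {x | ∃ i, ‖x * y i‖ ≤ 1}
  zero_mem' := ⟨Classical.arbitrary ι, by simp⟩
  add_mem' := by
    rintro u v ⟨i, hi⟩ ⟨j, hj⟩
    wlog hij : ‖y i‖ ≤ ‖y j‖ generalizing u v i j
    · rw [add_comm]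
      exact this j hj i hi (le_of_not_ge hij)
    refine ⟨i, ?_⟩
    rw [add_mul]
    refine (IsUltrametricDist.norm_add_le_max _ _).trans (max_le hi (le_trans ?_ hj))
    rw [norm_mul, norm_mul]
    gcongr

namespace denominators

variable {y : ι → F}

lemma mem_iff {x : F} : x ∈ denominators y ↔ ∃ i, ‖x * y i‖ ≤ 1 := Iff.rfl

lemma mul_mem_of_norm_le_one {c x : F} (hc : ‖c‖ ≤ 1) (hx : x ∈ denominators y) :
    c * x ∈ denominators y := by
  obtain ⟨i, hi⟩ := hx
  refine ⟨i, ?_⟩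
  rw [mul_assoc, norm_mul]
  exact mul_le_one₀ hc (norm_nonneg _) hi

lemma map_mem_of_mem_span {R : Type*} [CommRing R] (φ : R →+* F) (hφ : ∀ r, ‖φ r‖ ≤ 1) {s : Set R}
    (hs : ∀ r ∈ s, φ r ∈ denominators y) {r : R} (hr : r ∈ Ideal.span s) :
    φ r ∈ denominators y := by
  induction hr using Submodule.span_induction with
  | mem r hr => exact hs r hr
  | zero => exact map_zero φ ▸ zero_mem _
  | add r t _ _ hr ht => exact map_add φ r t ▸ add_mem hr ht
  | smul c r _ hr =>
    rw [smul_eq_mul, map_mul]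
    exact mul_mem_of_norm_le_one (hφ c) hr

lemma prod_one_add_sub_one_mem (hy : ∀ i, 1 ≤ ‖y i‖) {s : Multiset F}
    (hs : ∀ u ∈ s, u ∈ denominators y) :
    (s.map fun u ↦ 1 + u).prod - 1 ∈ denominators y := by
  induction s using Multiset.induction_on with
  | empty => simp
  | cons u s ih =>
    have hu := hs u (Multiset.mem_cons_self u s)
    have hP := ih fun v hv ↦ hs v (Multiset.mem_cons_of_mem hv)
    have hu1 : ‖u‖ ≤ 1 := by
      obtain ⟨i, hi⟩ := hu
      rw [norm_mul] at hi
      exact (le_mul_of_one_le_right (norm_nonneg u) (hy i)).trans hi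
    set P := (s.map fun u ↦ 1 + u).prod
    have hsplit : ((u ::ₘ s).map fun u ↦ 1 + u).prod - 1 = u * (P - 1) + (P - 1) + u := by
      rw [Multiset.map_cons, Multiset.prod_cons]
      ring
    rw [hsplit]
    exact add_mem (add_mem (mul_mem_of_norm_le_one hu1 hP) hP) hu

lemma mem_iff_of_isLeast {r : ℝ} (hr : IsLeast (Set.range fun i ↦ ‖y i‖) r) {x : F} :
    x ∈ denominators y ↔ ‖x‖ * r ≤ 1 := by
  obtain ⟨⟨i₀, rfl⟩, hle⟩ := hr
  simp only [mem_iff, norm_mul]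
  refine ⟨fun ⟨i, hi⟩ ↦ le_trans ?_ hi, fun h ↦ ⟨i₀, h⟩⟩
  gcongr
  exact hle ⟨i, rfl⟩

lemma mem_iff_of_isGLB {r : ℝ} (hr : IsGLB (Set.range fun i ↦ ‖y i‖) r)
    (hr' : r ∉ Set.range fun i ↦ ‖y i‖) {x : F} :
    x ∈ denominators y ↔ ‖x‖ * r < 1 := by
  simp only [mem_iff, norm_mul]
  have hlt (i : ι) : r < ‖y i‖ := (hr.1 ⟨i, rfl⟩).lt_of_ne fun h ↦ hr' ⟨i, h.symm⟩
  rcases eq_or_ne x 0 with rfl | hx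
  · simp
  have hx : 0 < ‖x‖ := norm_pos_iff.2 hx
  constructor
  · rintro ⟨i, hi⟩
    exact (mul_lt_mul_of_pos_left (hlt i) hx).trans_le hi
  · intro h
    obtain ⟨_, ⟨i, rfl⟩, -, hi⟩ := hr.exists_between ((lt_div_iff₀' hx).2 h)
    exact ⟨i, ((lt_div_iff₀' hx).1 hi).le⟩

end denominators

end Denominators

section AlgebraicExtension

variable {K L : Type*} [NontriviallyNormedField K] [CompleteSpace K] [IsUltrametricDist K]
  [NormedField L] [NormedAlgebra K L] [Algebra.IsAlgebraic K L]

lemma norm_algEquiv_apply (σ : L ≃ₐ[K] L) (x : L) : ‖σ x‖ = ‖x‖ := by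
  rw [NormedAlgebra.norm_eq_spectralNorm K, NormedAlgebra.norm_eq_spectralNorm K,
    ← spectralNorm_eq_of_equiv]

lemma norm_algebraNorm [FiniteDimensional K L] [IsGalois K L] (x : L) :
    ‖Algebra.norm K x‖ = ‖x‖ ^ Nat.card (L ≃ₐ[K] L) := by
  rw [← norm_algebraMap' L, Algebra.norm_eq_prod_automorphisms, norm_prod]
  simp only [norm_algEquiv_apply, Finset.prod_const, Finset.card_univ, Nat.card_eq_fintype_card]

lemma isIntegral_normValuationSubring_iff {x : L} :
    IsIntegral (normValuationSubring K) x ↔ ‖x‖ ≤ 1 := by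
  have hx : IsIntegral K x := Algebra.IsIntegral.isIntegral x
  rw [NormedAlgebra.norm_eq_spectralNorm K, spectralNorm,
    spectralValue_le_one_iff (minpoly.monic hx)]
  constructor
  · intro hxA n
    rw [minpoly.isIntegrallyClosed_eq_field_fractions' K hxA, Polynomial.coeff_map]
    exact mem_normValuationSubring.1 ((minpoly (normValuationSubring K) x).coeff n).2
  · intro hcoeff
    have hlifts : minpoly K x ∈ Polynomial.lifts (algebraMap (normValuationSubring K) K) :=
      (Polynomial.lifts_iff_coeff_lifts _).2 fun n ↦ ⟨⟨_, hcoeff n⟩, rfl⟩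
    obtain ⟨P, hP, -, hmonic⟩ :=
      Polynomial.lifts_and_natDegree_eq_and_monic hlifts (minpoly.monic hx)
    refine ⟨P, hmonic, ?_⟩
    rw [IsScalarTower.algebraMap_eq (normValuationSubring K) K L, ← Polynomial.eval₂_map, hP]
    exact minpoly.aeval K x

end AlgebraicExtension

section ArtinSchreierExtension

open Polynomial IntermediateField

section Algebraic

variable {K Ω : Type*} [Field K] [Field Ω] [Algebra K Ω] {p : ℕ} [hp : Fact p.Prime]
  {f : K} {α : Ω}

lemma isIntegral_of_minpoly_eq (hmin : minpoly K α = X ^ p - X - C f) : IsIntegral K α := by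
  refine minpoly.ne_zero_iff.1 fun h0 ↦ ?_
  have hcoeff : (X ^ p - X - C f).coeff p = 1 := by
    simp [coeff_X, coeff_C, hp.out.ne_zero, hp.out.one_lt.ne]
  rw [← hmin, h0, coeff_zero] at hcoeff
  exact zero_ne_one hcoeff

lemma natDegree_X_pow_sub_X_sub_C {R : Type*} [CommRing R] [Nontrivial R] {n : ℕ} (hn : 1 < n)
    (c : R) : (X ^ n - X - C c).natDegree = n := by
  rw [natDegree_sub_C, natDegree_sub_eq_left_of_natDegree_lt] <;> simp [hn]

lemma finrank_adjoin_of_minpoly_eq (hmin : minpoly K α = X ^ p - X - C f) :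
    Module.finrank K K⟮α⟯ = p := by
  rw [adjoin.finrank (isIntegral_of_minpoly_eq hmin), hmin,
    natDegree_X_pow_sub_X_sub_C hp.out.one_lt]

variable [CharP K p]

lemma exists_algEquiv_gen_eq_add_one (hmin : minpoly K α = X ^ p - X - C f) :
    ∃ σ : K⟮α⟯ ≃ₐ[K] K⟮α⟯, σ (AdjoinSimple.gen K α) = AdjoinSimple.gen K α + 1 := by
  have hintegral := isIntegral_of_minpoly_eq hmin
  have := adjoin.finiteDimensional hintegral
  have := charP_of_injective_algebraMap (algebraMap K K⟮α⟯).injective p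
  let pb := adjoin.powerBasis hintegral
  have hgen : pb.gen = AdjoinSimple.gen K α := adjoin.powerBasis_gen hintegral
  have hroot : aeval (pb.gen + 1) (minpoly K pb.gen) = 0 := by
    have haeval := minpoly.aeval K pb.gen
    rw [hgen, minpoly_gen, hmin] at haeval ⊢
    simp only [map_sub, map_pow, aeval_X, aeval_C] at haeval ⊢
    rw [add_pow_char, one_pow]
    linear_combination haeval
  refine ⟨AlgEquiv.ofBijective (pb.lift _ hroot) (Algebra.IsAlgebraic.algHom_bijective _), ?_⟩
  rw [AlgEquiv.coe_ofBijective, ← hgen, pb.lift_gen]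

variable {L : Type*} [Field L] [Algebra K L] {γ : L} {σ : L ≃ₐ[K] L}

lemma algEquiv_pow_apply_of_apply_eq_add_one (hσ : σ γ = γ + 1) (n : ℕ) : (σ ^ n) γ = γ + n := by
  induction n with
  | zero => simp
  | succ n ih =>
    rw [pow_succ', AlgEquiv.mul_apply, ih, map_add, hσ, map_natCast, Nat.cast_succ]
    ring

lemma natCard_algEquiv_adjoin (hmin : minpoly K α = X ^ p - X - C f) :
    Nat.card (K⟮α⟯ ≃ₐ[K] K⟮α⟯) = p := by
  have hintegral := isIntegral_of_minpoly_eq hmin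
  have := adjoin.finiteDimensional hintegral
  have := charP_of_injective_algebraMap (algebraMap K K⟮α⟯).injective p
  obtain ⟨σ, hσ⟩ := exists_algEquiv_gen_eq_add_one hmin
  have hpow : σ ^ p = 1 := by
    let pb := adjoin.powerBasis hintegral
    have hext : ((σ ^ p : K⟮α⟯ ≃ₐ[K] K⟮α⟯) : K⟮α⟯ →ₐ[K] K⟮α⟯) = AlgHom.id K _ := by
      apply pb.algHom_ext
      rw [adjoin.powerBasis_gen]
      simp [algEquiv_pow_apply_of_apply_eq_add_one hσ]
    ext1 x
    exact DFunLike.congr_fun hext x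
  have hne : σ ≠ 1 := by
    rintro rfl
    simp at hσ
  apply le_antisymm
  · calc Nat.card (K⟮α⟯ ≃ₐ[K] K⟮α⟯) ≤ Module.finrank K K⟮α⟯ := by
          rw [Nat.card_eq_fintype_card]
          exact AlgEquiv.card_le
      _ = p := finrank_adjoin_of_minpoly_eq hmin
  · calc p = orderOf σ := (orderOf_eq_prime hpow hne).symm
      _ ≤ Nat.card (K⟮α⟯ ≃ₐ[K] K⟮α⟯) := orderOf_le_card

end Algebraic

section Cyclic

variable {K Ω : Type} [Field K] [Field Ω] [Algebra K Ω] {p : ℕ} [hp : Fact p.Prime]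
  [CharP K p] {f : K} {α : Ω}

lemma isCyclicOfDegree_adjoin (hmin : minpoly K α = X ^ p - X - C f) :
    IsCyclicOfDegree K K⟮α⟯ p := by
  have := adjoin.finiteDimensional (isIntegral_of_minpoly_eq hmin)
  have hcard := natCard_algEquiv_adjoin hmin
  refine ⟨IsGalois.of_card_aut_eq_finrank _ _ ?_, this, isCyclic_of_prime_card hcard, hcard⟩
  rw [hcard, finrank_adjoin_of_minpoly_eq hmin]

end Cyclic

section MeanOfRoots

variable {K Ω : Type*} [NormedField K] [NormedField Ω] [NormedAlgebra K Ω] [IsAlgClosed Ω]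

/- The mean of the roots of `q` lies in `K`, and its distance to `α` is at most the largest of the
distances from `α` to the roots. -/
lemma exists_mem_aroots_norm_sub_le {q : K[X]} (hq : q.Monic) (hdeg : (q.natDegree : K) ≠ 0)
    (p : ℕ) [hp : Fact p.Prime] [CharP K p] (α : Ω) :
    ∃ r ∈ q.aroots Ω, ∃ g : K, ‖α - algebraMap K Ω g‖ ≤ ‖α - r‖ := by
  have := charP_of_injective_algebraMap (algebraMap K Ω).injective p
  have := isUltrametricDist_of_charP Ω p
  have hsplits : (q.map (algebraMap K Ω)).Splits := IsAlgClosed.splits _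
  have hcard : (q.aroots Ω).card = q.natDegree := by
    rw [aroots_def, ← hsplits.natDegree_eq_card_roots, natDegree_map]
  have hne : q.aroots Ω ≠ 0 := by
    rintro h0
    rw [h0, Multiset.card_zero] at hcard
    exact hdeg (by rw [← hcard, Nat.cast_zero])
  have hsum : (q.aroots Ω).sum = -algebraMap K Ω q.nextCoeff := by
    rw [← nextCoeff_map (algebraMap K Ω).injective,
      hsplits.nextCoeff_eq_neg_sum_roots_of_monic (hq.map _), neg_neg, aroots_def]
  have hdegΩ : (q.natDegree : Ω) ≠ 0 := by
    rwa [← map_natCast (algebraMap K Ω), _root_.map_ne_zero]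
  obtain ⟨r, hr, hle⟩ := IsUltrametricDist.exists_norm_multiset_sum_le _ (f := fun r ↦ α - r)
  refine ⟨r, hr hne, -q.nextCoeff / q.natDegree, le_of_eq_of_le ?_ hle⟩
  have hmean : ((q.aroots Ω).map fun r ↦ α - r).sum =
      q.natDegree * (α - algebraMap K Ω (-q.nextCoeff / q.natDegree)) := by
    rw [Multiset.sum_map_sub, Multiset.map_const', Multiset.sum_replicate, hcard, Multiset.map_id',
      hsum, nsmul_eq_mul, map_div₀, map_natCast, map_neg]
    field_simp
  rw [hmean, norm_mul, norm_eq_one_of_pow_eq_self hp.out.one_lt hdegΩ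
    (natCast_pow_char_eq_self p _), one_mul]

end MeanOfRoots

lemma aeval_add_one_div_aeval {k Ω : Type*} [Field k] [Field Ω] [IsAlgClosed Ω] [Algebra k Ω]
    {P : k[X]} {x : Ω} (hx : aeval x P ≠ 0) :
    aeval (x + 1) P / aeval x P =
      (((P.aroots Ω).map fun a ↦ (x - a)⁻¹).map fun u ↦ 1 + u).prod := by
  have hsplits : (P.map (algebraMap k Ω)).Splits := IsAlgClosed.splits _
  have hprod (y : Ω) : aeval y P =
      algebraMap k Ω P.leadingCoeff * ((P.aroots Ω).map fun a ↦ y - a).prod := by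
    rw [← eval_map_algebraMap, hsplits.eval_eq_prod_roots, leadingCoeff_map, aroots_def]
  have hxa {a : Ω} (ha : a ∈ P.aroots Ω) : x - a ≠ 0 := by
    rintro h0
    rw [sub_eq_zero.1 h0] at hx
    exact hx (mem_aroots.1 ha).2
  rw [hprod x] at hx
  rw [hprod, hprod, mul_div_mul_left _ _ (left_ne_zero_of_mul hx), ← Multiset.prod_map_div,
    Multiset.map_map]
  refine congrArg _ (Multiset.map_congr rfl fun a ha ↦ ?_)
  have := hxa ha
  simp only [Function.comp_apply]
  field_simp
  ring

lemma norm_algEquiv_sub_self_le_one {K L : Type*} [NormedField K] [NormedField L]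
    [NormedAlgebra K L] {p : ℕ} [hp : Fact p.Prime] [CharP K p] {f : K} {α : L}
    (hα : artinSchreier p α = algebraMap K L f) (τ : L ≃ₐ[K] L) : ‖τ α - α‖ ≤ 1 := by
  have := charP_of_injective_algebraMap (algebraMap K L).injective p
  refine norm_le_one_of_pow_eq_self hp.out.one_lt (sub_eq_zero.1 ?_)
  change artinSchreier p (τ α - α) = 0
  have hτ := map_artinSchreier p (τ : L →+* L) α
  rw [RingHom.coe_coe, hα, AlgEquiv.commutes] at hτ
  rw [artinSchreier_sub, hα, ← hτ, sub_self]

section Conjugates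

variable {K Ω : Type*} [NontriviallyNormedField K] [CompleteSpace K] [IsUltrametricDist K]
  [NormedField Ω] [NormedAlgebra K Ω] [IsAlgClosed Ω] [Algebra.IsAlgebraic K Ω] {p : ℕ}
  [hp : Fact p.Prime] [CharP K p] {f : K} {α : Ω}

lemma norm_sub_le_max_of_mem_aroots_minpoly (hα : artinSchreier p α = algebraMap K Ω f) {a r : Ω}
    (hr : r ∈ (minpoly K a).aroots Ω) : ‖α - r‖ ≤ max ‖α - a‖ 1 := by
  have := IsUltrametricDist.of_normedAlgebra K (L := Ω)
  have : Normal K Ω := normal_iff.2 fun x ↦ ⟨Algebra.IsIntegral.isIntegral x, IsAlgClosed.splits _⟩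
  obtain ⟨τ, rfl⟩ : ∃ τ : Ω ≃ₐ[K] Ω, τ a = r :=
    isConjRoot_iff_exists_algEquiv.1 <| IsConjRoot.symm <|
      (isConjRoot_iff_aeval_eq_zero (Algebra.IsIntegral.isIntegral a)).2 (mem_aroots.1 hr).2
  have hsplit : α - τ a = τ (α - a) + -(τ α - α) := by
    rw [map_sub]
    ring
  rw [hsplit]
  refine (IsUltrametricDist.norm_add_le_max _ _).trans (max_le_max ?_ ?_)
  · rw [norm_algEquiv_apply]
  · rw [norm_neg]
    exact norm_algEquiv_sub_self_le_one hα τ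

lemma exists_norm_sub_algebraMap_le (hα : artinSchreier p α = algebraMap K Ω f)
    (hαK : ∀ g : K, 1 < ‖α - algebraMap K Ω g‖) {a : Ω} (ha : (minpoly K a).natDegree < p) :
    ∃ g : K, ‖α - algebraMap K Ω g‖ ≤ ‖α - a‖ := by
  have hintegral : IsIntegral K a := Algebra.IsIntegral.isIntegral a
  have hdeg : ((minpoly K a).natDegree : K) ≠ 0 := by
    rw [Ne, CharP.cast_eq_zero_iff K p]
    exact Nat.not_dvd_of_pos_of_lt (minpoly.natDegree_pos hintegral) ha
  obtain ⟨r, hr, g, hg⟩ := exists_mem_aroots_norm_sub_le (minpoly.monic hintegral) hdeg p α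
  refine ⟨g, ?_⟩
  have hmax := hg.trans (norm_sub_le_max_of_mem_aroots_minpoly hα hr)
  exact (le_max_iff.1 hmax).resolve_right (hαK g).not_ge

lemma minpoly_eq_X_pow_sub_X_sub_C (hα : artinSchreier p α = algebraMap K Ω f)
    (hαK : ∀ g : K, 1 < ‖α - algebraMap K Ω g‖) : minpoly K α = X ^ p - X - C f := by
  have hintegral : IsIntegral K α := Algebra.IsIntegral.isIntegral α
  have hdeg := natDegree_X_pow_sub_X_sub_C hp.out.one_lt f
  have hroot : aeval α (X ^ p - X - C f) = 0 := by
    simp [← hα, artinSchreier]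
  have hmonic : (X ^ p - X - C f).Monic := by
    rw [sub_sub]
    refine monic_X_pow_sub ?_
    rw [degree_X_add_C]
    exact_mod_cast hp.out.one_lt
  refine (eq_of_monic_of_dvd_of_natDegree_le (minpoly.monic hintegral) hmonic
    (minpoly.dvd K α hroot) ?_).symm
  rw [hdeg]
  by_contra! hlt
  obtain ⟨g, hg⟩ := exists_norm_sub_algebraMap_le hα hαK hlt
  rw [sub_self, norm_zero] at hg
  exact absurd (hαK g) (hg.trans zero_le_one).not_gt

lemma aeval_add_one_div_aeval_sub_one_mem [IsUltrametricDist Ω]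
    (hα : artinSchreier p α = algebraMap K Ω f)
    (hαK : ∀ g : K, 1 < ‖α - algebraMap K Ω g‖) {P : K[X]} (hP : P.natDegree < p)
    (hPα : aeval α P ≠ 0) :
    aeval (α + 1) P / aeval α P - 1 ∈ denominators fun g : K ↦ α - algebraMap K Ω g := by
  rw [aeval_add_one_div_aeval hPα]
  refine denominators.prod_one_add_sub_one_mem (fun g ↦ (hαK g).le) fun u hu ↦ ?_
  obtain ⟨a, ha, rfl⟩ := Multiset.mem_map.1 hu
  obtain ⟨hP0, hroot⟩ := mem_aroots.1 ha
  have hdeg : (minpoly K a).natDegree < p :=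
    (natDegree_le_of_dvd (minpoly.dvd K a hroot) hP0).trans_lt hP
  obtain ⟨g, hg⟩ := exists_norm_sub_algebraMap_le hα hαK hdeg
  refine ⟨g, ?_⟩
  rw [norm_mul, norm_inv, inv_mul_eq_div]
  exact div_le_one_of_le₀ hg (norm_nonneg _)

lemma algEquiv_gen_div_self_sub_one_mem [IsUltrametricDist K⟮α⟯]
    (hα : artinSchreier p α = algebraMap K Ω f)
    (hαK : ∀ g : K, 1 < ‖α - algebraMap K Ω g‖) {σ : K⟮α⟯ ≃ₐ[K] K⟮α⟯}
    (hσ : σ (AdjoinSimple.gen K α) = AdjoinSimple.gen K α + 1) {x : K⟮α⟯} (hx : x ≠ 0) :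
    σ x / x - 1 ∈ denominators fun g : K ↦ AdjoinSimple.gen K α - algebraMap K K⟮α⟯ g := by
  have := IsUltrametricDist.of_normedAlgebra K (L := Ω)
  have hintegral : IsIntegral K α := Algebra.IsIntegral.isIntegral α
  obtain ⟨P, hP, rfl⟩ := (adjoin.powerBasis hintegral).exists_eq_aeval x
  rw [adjoin.powerBasis_gen] at hx ⊢
  rw [adjoin.powerBasis_dim, minpoly_eq_X_pow_sub_X_sub_C hα hαK,
    natDegree_X_pow_sub_X_sub_C hp.out.one_lt] at hP
  have haeval (y : K⟮α⟯) : ((aeval y P : K⟮α⟯) : Ω) = aeval (y : Ω) P :=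
    (aeval_algebraMap_apply Ω y P).symm
  have hPα : aeval α P ≠ 0 := by
    have := haeval (AdjoinSimple.gen K α)
    rw [AdjoinSimple.coe_gen] at this
    rw [← this]
    exact_mod_cast hx
  obtain ⟨g, hg⟩ := aeval_add_one_div_aeval_sub_one_mem hα hαK hP hPα
  have hσP : σ (aeval (AdjoinSimple.gen K α) P) = aeval (AdjoinSimple.gen K α + 1) P := by
    rw [← hσ]
    exact (aeval_algHom_apply (σ : K⟮α⟯ →ₐ[K] K⟮α⟯) (AdjoinSimple.gen K α) P).symm
  have hcoe : (((aeval (AdjoinSimple.gen K α + 1) P / aeval (AdjoinSimple.gen K α) P - 1) *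
      (AdjoinSimple.gen K α - algebraMap K K⟮α⟯ g) : K⟮α⟯) : Ω) =
      (aeval (α + 1) P / aeval α P - 1) * (α - algebraMap K Ω g) := by
    push_cast [haeval]
    rfl
  refine ⟨g, ?_⟩
  rw [hσP]
  exact (congrArg norm hcoe).trans_le hg

end Conjugates

end ArtinSchreierExtension

section AssociatedIdeal

/-- The ideal `J_σ` of the integral closure of `A` in `L` generated by the `σ x / x - 1`. -/
def quotientSubOneIdeal {K L : Type} [Field K] [Field L] [Algebra K L] (A : ValuationSubring K)
    [Algebra A L] (σ : L ≃ₐ[K] L) : Ideal (integralClosure A L) :=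
  Ideal.span {b | ∃ x : Lˣ, (b : L) = σ (x : L) * (x : L)⁻¹ - 1}

lemma norm_sub_artinSchreier_of_root {K L : Type*} [NormedField K] [NormedField L]
    [NormedAlgebra K L] {p : ℕ} [hp : Fact p.Prime] [CharP K p] {f : K} {γ : L}
    (hγ : artinSchreier p γ = algebraMap K L f) {g : K} (hg : 1 < ‖γ - algebraMap K L g‖) :
    ‖f - artinSchreier p g‖ = ‖γ - algebraMap K L g‖ ^ p := by
  have := charP_of_injective_algebraMap (algebraMap K L).injective p
  rw [← norm_artinSchreier_of_one_lt hg, artinSchreier_sub, hγ, ← map_artinSchreier, ← map_sub,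
    norm_algebraMap']

variable {K L : Type} [NontriviallyNormedField K] [CompleteSpace K] [IsUltrametricDist K]
  [NormedField L] [NormedAlgebra K L] [Algebra.IsAlgebraic K L] {σ : L ≃ₐ[K] L}

lemma exists_mem_quotientSubOneIdeal_eq_inv {x : L} (hx : 1 < ‖x‖)
    (hσ : σ x = x + 1) :
    ∃ b ∈ quotientSubOneIdeal (normValuationSubring K) σ, (b : L) = x⁻¹ := by
  have hx0 : x ≠ 0 := norm_pos_iff.1 (one_pos.trans hx)
  have hintegral : IsIntegral (normValuationSubring K) x⁻¹ := by
    rw [isIntegral_normValuationSubring_iff, norm_inv]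
    exact inv_le_one_of_one_le₀ hx.le
  refine ⟨⟨x⁻¹, hintegral⟩, Ideal.subset_span ⟨Units.mk0 x hx0, ?_⟩, rfl⟩
  rw [Units.val_mk0, hσ, add_mul, mul_inv_cancel₀ hx0, one_mul, add_sub_cancel_left]

variable [IsUltrametricDist L]

lemma coe_mem_denominators_of_mem_quotientSubOneIdeal {ι : Type*}
    [Nonempty ι] {y : ι → L} (hy : ∀ x ≠ 0, σ x / x - 1 ∈ denominators y)
    {b : integralClosure (normValuationSubring K) L}
    (hb : b ∈ quotientSubOneIdeal (normValuationSubring K) σ) : (b : L) ∈ denominators y := by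
  refine denominators.map_mem_of_mem_span (algebraMap (integralClosure _ L) L)
    (fun c ↦ isIntegral_normValuationSubring_iff.1 c.2) ?_ hb
  rintro c ⟨x, hx⟩
  change (c : L) ∈ denominators y
  rw [hx, ← div_eq_mul_inv]
  exact hy x x.ne_zero

variable {p : ℕ} [hp : Fact p.Prime] [CharP K p] {f : K} {γ : L}

theorem mem_associatedIdeal_iff (hL : IsCyclicOfDegree K L p)
    (hγ : artinSchreier p γ = algebraMap K L f) (hγK : ∀ g : K, 1 < ‖γ - algebraMap K L g‖)
    (hσ : σ γ = γ + 1)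
    (hσK : ∀ x ≠ 0, σ x / x - 1 ∈ denominators fun g : K ↦ γ - algebraMap K L g)
    {H : Ideal (normValuationSubring K)} (hH : IsAssociatedIdeal (normValuationSubring K) L H)
    {a : normValuationSubring K} :
    a ∈ H ↔ (a : K) ∈ denominators fun g ↦ f - artinSchreier p g := by
  obtain ⟨hgal, hfin, -, hcard⟩ := hL
  have hgen (τ : L ≃ₐ[K] L) : τ ∈ Subgroup.zpowers σ := by
    refine mem_zpowers_of_prime_card hcard ?_
    rintro rfl
    simp at hσ
  have hnorm (x : L) : ‖Algebra.norm K x‖ = ‖x‖ ^ p := hcard ▸ norm_algebraNorm x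
  rw [hH σ hgen]
  constructor
  · refine denominators.map_mem_of_mem_span (algebraMap (normValuationSubring K) K)
      (fun c ↦ mem_normValuationSubring.1 c.2) ?_
    rintro c ⟨b, hb, hcb⟩
    obtain ⟨g, hg⟩ := coe_mem_denominators_of_mem_quotientSubOneIdeal hσK hb
    refine ⟨g, ?_⟩
    rw [norm_mul] at hg ⊢
    rw [hcb, hnorm, norm_sub_artinSchreier_of_root hγ (hγK g), ← mul_pow]
    exact pow_le_one₀ (by positivity) hg
  · rintro ⟨g, hg⟩
    have hσg : σ (γ - algebraMap K L g) = γ - algebraMap K L g + 1 := by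
      rw [map_sub, hσ, AlgEquiv.commutes]
      ring
    obtain ⟨b, hb, hbg⟩ := exists_mem_quotientSubOneIdeal_eq_inv (hγK g) hσg
    have hbnorm : ‖Algebra.norm K (b : L)‖ = ‖f - artinSchreier p g‖⁻¹ := by
      rw [hnorm, hbg, norm_inv, inv_pow, norm_sub_artinSchreier_of_root hγ (hγK g)]
    have hpos : 1 < ‖f - artinSchreier p g‖ := by
      rw [norm_sub_artinSchreier_of_root hγ (hγK g)]
      exact one_lt_pow₀ (hγK g) hp.out.ne_zero
    let n : normValuationSubring K := ⟨Algebra.norm K (b : L), by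
      rw [mem_normValuationSubring, hbnorm]
      exact inv_le_one_of_one_le₀ hpos.le⟩
    have hna : n ∣ a := by
      rw [normValuationSubring_dvd_iff]
      change _ ≤ ‖Algebra.norm K (b : L)‖
      rw [norm_mul] at hg
      rwa [hbnorm, ← one_div, le_div_iff₀ (one_pos.trans hpos)]
    exact Ideal.mem_of_dvd _ hna (Ideal.subset_span ⟨b, hb, rfl⟩)

end AssociatedIdeal

section Existence

open IntermediateField

variable {K : Type} [NontriviallyNormedField K] [CompleteSpace K] [IsUltrametricDist K]
  {p : ℕ} [hp : Fact p.Prime] [CharP K p] {f : K}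

lemma mem_associatedIdeal_adjoin_iff {Ω : Type} [NormedField Ω] [NormedAlgebra K Ω] [IsAlgClosed Ω]
    [Algebra.IsAlgebraic K Ω] {α : Ω} (hα : artinSchreier p α = algebraMap K Ω f)
    (hαK : ∀ g : K, 1 < ‖α - algebraMap K Ω g‖) {H : Ideal (normValuationSubring K)}
    (hH : IsAssociatedIdeal (normValuationSubring K) K⟮α⟯ H) {a : normValuationSubring K} :
    a ∈ H ↔ (a : K) ∈ denominators fun g ↦ f - artinSchreier p g := by
  have := IsUltrametricDist.of_normedAlgebra K (L := K⟮α⟯)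
  have hmin := minpoly_eq_X_pow_sub_X_sub_C hα hαK
  obtain ⟨σ, hσ⟩ := exists_algEquiv_gen_eq_add_one hmin
  have hγ : artinSchreier p (AdjoinSimple.gen K α) = algebraMap K K⟮α⟯ f := by
    apply (algebraMap K⟮α⟯ Ω).injective
    rw [map_artinSchreier]
    exact hα
  exact mem_associatedIdeal_iff (isCyclicOfDegree_adjoin hmin) hγ hαK hσ
    (fun x ↦ algEquiv_gen_div_self_sub_one_mem hα hαK hσ) hH

theorem exists_isCyclicOfDegree_mem_associatedIdeal_iff
    (hf : ∀ r ∈ artinSchreierNorms p f, 1 < r) :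
    ∃ (L : Type) (_ : Field L) (_ : Algebra K L), IsCyclicOfDegree K L p ∧
      ∀ H : Ideal (normValuationSubring K), IsAssociatedIdeal (normValuationSubring K) L H →
        ∀ a : normValuationSubring K,
          a ∈ H ↔ (a : K) ∈ denominators fun g ↦ f - artinSchreier p g := by
  let Ω := AlgebraicClosure K
  let : NormedField Ω := spectralNorm.normedField K Ω
  let : NormedAlgebra K Ω := spectralNorm.normedAlgebra K Ω
  have := charP_of_injective_algebraMap (algebraMap K Ω).injective p
  obtain ⟨α, hα⟩ := exists_artinSchreier_eq hp.out.one_lt (algebraMap K Ω f)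
  have hαK (g : K) : 1 < ‖α - algebraMap K Ω g‖ := by
    apply one_lt_norm_of_one_lt_norm_artinSchreier (p := p)
    rw [artinSchreier_sub, hα, ← map_artinSchreier, ← map_sub, norm_algebraMap']
    exact hf _ ⟨g, rfl⟩
  exact ⟨K⟮α⟯, inferInstance, inferInstance,
    isCyclicOfDegree_adjoin (minpoly_eq_X_pow_sub_X_sub_C hα hαK),
    fun H hH a ↦ mem_associatedIdeal_adjoin_iff hα hαK hH⟩

theorem exists_associatedIdeal_eq_span {c : normValuationSubring K} (hc : c ≠ 0)
    (hcm : c ∈ IsLocalRing.maximalIdeal _) (hf : IsLeast (artinSchreierNorms p f) ‖(c : K)‖⁻¹) :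
    ∃ (L : Type) (_ : Field L) (_ : Algebra K L), IsCyclicOfDegree K L p ∧
      ∀ H : Ideal (normValuationSubring K), IsAssociatedIdeal (normValuationSubring K) L H →
        H = Ideal.span {c} := by
  have hcpos : 0 < ‖(c : K)‖ := norm_pos_iff.2 (by exact_mod_cast hc)
  obtain ⟨L, _, _, hL, hH⟩ := exists_isCyclicOfDegree_mem_associatedIdeal_iff
    (p := p) (f := f) fun r hr ↦ ((one_lt_inv₀ hcpos).2
      (mem_maximalIdeal_normValuationSubring.1 hcm)).trans_le (hf.2 hr)
  refine ⟨L, _, _, hL, fun H hHL ↦ Ideal.ext fun a ↦ ?_⟩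
  rw [hH H hHL, denominators.mem_iff_of_isLeast hf, Ideal.mem_span_singleton,
    normValuationSubring_dvd_iff, ← div_eq_mul_inv, div_le_one hcpos]

theorem exists_associatedIdeal_eq_span_mul_maximalIdeal {c : normValuationSubring K} (hc : c ≠ 0)
    (hcm : c ∈ IsLocalRing.maximalIdeal _) (hf : IsGLB (artinSchreierNorms p f) ‖(c : K)‖⁻¹)
    (hf' : ‖(c : K)‖⁻¹ ∉ artinSchreierNorms p f) :
    ∃ (L : Type) (_ : Field L) (_ : Algebra K L), IsCyclicOfDegree K L p ∧
      ∀ H : Ideal (normValuationSubring K), IsAssociatedIdeal (normValuationSubring K) L H →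
        H = Ideal.span {c} * IsLocalRing.maximalIdeal (normValuationSubring K) := by
  have hcpos : 0 < ‖(c : K)‖ := norm_pos_iff.2 (by exact_mod_cast hc)
  obtain ⟨L, _, _, hL, hH⟩ := exists_isCyclicOfDegree_mem_associatedIdeal_iff
    (p := p) (f := f) fun r hr ↦ ((one_lt_inv₀ hcpos).2
      (mem_maximalIdeal_normValuationSubring.1 hcm)).trans_le (hf.1 hr)
  refine ⟨L, _, _, hL, fun H hHL ↦ Ideal.ext fun a ↦ ?_⟩
  rw [hH H hHL, denominators.mem_iff_of_isGLB hf hf', mem_span_singleton_mul_maximalIdeal hc,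
    ← div_eq_mul_inv, div_lt_one hcpos]

end Existence

section HahnSeriesNorm

variable {G R : Type*} [AddCommGroup G] [LinearOrder G] [IsOrderedAddMonoid G] [Ring R] [IsDomain R]

open Classical in
/-- The absolute value on Hahn series obtained by exponentiating the valuation `φ ∘ order`; the
order homomorphism `φ` forgets the part of the exponents which is infinitesimal for the norm. -/
noncomputable def hahnAbsoluteValue (φ : G →+o ℝ) : AbsoluteValue (HahnSeries G R) ℝ where
  toFun x := if x = 0 then 0 else Real.exp (-φ x.order)
  map_mul' x y := by
    rcases eq_or_ne x 0 with rfl | hx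
    · simp only [zero_mul, if_true]
    rcases eq_or_ne y 0 with rfl | hy
    · simp only [mul_zero, if_true]
    rw [if_neg hx, if_neg hy, if_neg (mul_ne_zero hx hy), HahnSeries.order_mul hx hy, map_add,
      neg_add, Real.exp_add]
  nonneg' x := by positivity
  eq_zero' x := by simp only [ite_eq_left_iff, Real.exp_ne_zero, imp_false, not_not]
  add_le' x y := by
    rcases eq_or_ne x 0 with rfl | hx
    · simp only [zero_add, if_true, le_refl]
    rcases eq_or_ne y 0 with rfl | hy
    · simp only [add_zero, if_true, le_refl]
    rcases eq_or_ne (x + y) 0 with hxy | hxy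
    · rw [if_pos hxy]
      positivity
    rw [if_neg hx, if_neg hy, if_neg hxy]
    have hord := φ.monotone' (HahnSeries.min_order_le_order_add hxy)
    rcases min_choice x.order y.order with h | h <;> rw [h] at hord
    · refine le_add_of_le_of_nonneg ?_ (Real.exp_pos _).le
      exact Real.exp_le_exp.2 (neg_le_neg hord)
    · refine le_add_of_nonneg_of_le (Real.exp_pos _).le ?_
      exact Real.exp_le_exp.2 (neg_le_neg hord)

variable (φ : G →+o ℝ) {x : HahnSeries G R} {g : G}

lemma hahnAbsoluteValue_of_ne_zero (hx : x ≠ 0) :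
    hahnAbsoluteValue φ x = Real.exp (-φ x.order) :=
  if_neg hx

lemma exp_le_hahnAbsoluteValue (hg : x.coeff g ≠ 0) :
    Real.exp (-φ g) ≤ hahnAbsoluteValue φ x := by
  rw [hahnAbsoluteValue_of_ne_zero φ (HahnSeries.ne_zero_of_coeff_ne_zero hg)]
  exact Real.exp_le_exp.2 (neg_le_neg (φ.monotone' (HahnSeries.order_le_of_coeff_ne_zero hg)))

lemma hahnAbsoluteValue_le_exp (hg : ∀ i < g, x.coeff i = 0) :
    hahnAbsoluteValue φ x ≤ Real.exp (-φ g) := by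
  rcases eq_or_ne x 0 with rfl | hx
  · rw [map_zero]
    positivity
  · rw [hahnAbsoluteValue_of_ne_zero φ hx]
    exact Real.exp_le_exp.2 (neg_le_neg (φ.monotone' ((HahnSeries.le_order_iff_forall hx).2 hg)))

lemma hahnAbsoluteValue_single {r : R} (hr : r ≠ 0) :
    hahnAbsoluteValue φ (HahnSeries.single g r) = Real.exp (-φ g) := by
  rw [hahnAbsoluteValue_of_ne_zero φ (HahnSeries.single_ne_zero hr), HahnSeries.order_single hr]

end HahnSeriesNorm

section Constants

variable {G R : Type*} [AddCommGroup G] [LinearOrder G] [CommRing R]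

/-- The Euler operator `t ^ g ↦ χ(g) t ^ g` on Hahn series attached to an additive character `χ` of
the group of exponents, generalizing `t d/dt`. -/
def eulerOperator (χ : G →+ R) (x : HahnSeries G R) : HahnSeries G R where
  coeff g := χ g * x.coeff g
  isPWO_support' := x.isPWO_support.mono fun _ hg ↦ right_ne_zero_of_mul hg

lemma coeff_eulerOperator (χ : G →+ R) (x : HahnSeries G R) (g : G) :
    (eulerOperator χ x).coeff g = χ g * x.coeff g :=
  rfl

lemma support_eulerOperator_subset (χ : G →+ R) (x : HahnSeries G R) :
    (eulerOperator χ x).support ⊆ x.support :=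
  fun _ hg ↦ right_ne_zero_of_mul hg

variable [IsOrderedAddMonoid G]

lemma eulerOperator_mul (χ : G →+ R) (x y : HahnSeries G R) :
    eulerOperator χ (x * y) = x * eulerOperator χ y + y * eulerOperator χ x := by
  ext g
  rw [HahnSeries.coeff_add, mul_comm y, coeff_eulerOperator, HahnSeries.coeff_mul,
    HahnSeries.coeff_mul_right' y.isPWO_support (support_eulerOperator_subset χ y),
    HahnSeries.coeff_mul_left' x.isPWO_support (support_eulerOperator_subset χ x),
    ← Finset.sum_add_distrib, Finset.mul_sum]
  refine Finset.sum_congr rfl fun ij hij ↦ ?_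
  rw [← (Finset.mem_antidiagonal.1 hij).2.2, map_add, coeff_eulerOperator, coeff_eulerOperator]
  ring

/-- The Euler operator of a character as a derivation. -/
noncomputable def eulerDerivation (χ : G →+ R) : Derivation ℤ (HahnSeries G R) (HahnSeries G R) :=
  Derivation.mk'
    (AddMonoidHom.toIntLinearMap
      { toFun := eulerOperator χ
        map_zero' := HahnSeries.ext (funext fun _ ↦ mul_zero _)
        map_add' _ _ := HahnSeries.ext (funext fun _ ↦ mul_add _ _ _) })
    (eulerOperator_mul χ)

lemma eulerDerivation_eq_zero_iff [NoZeroDivisors R] {χ : G →+ R} {x : HahnSeries G R} :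
    eulerDerivation χ x = 0 ↔ ∀ g, x.coeff g ≠ 0 → χ g = 0 := by
  refine HahnSeries.ext_iff.trans (funext_iff.trans (forall_congr' fun g ↦ ?_))
  change χ g * x.coeff g = 0 ↔ _
  rw [mul_eq_zero, or_iff_not_imp_right]

variable {ι k E : Type*} [CommRing k] [Field E] [Algebra k E]

/-- The field of elements which are eventually constant, along a filter, for a family of
derivations. -/
def eventualConstants (D : ι → Derivation k E E) (l : Filter ι) : Subfield E where
  carrier := {x | ∀ᶠ i in l, D i x = 0}
  mul_mem' hx hy := by
    filter_upwards [hx, hy] with i hxi hyi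
    rw [Derivation.leibniz, hxi, hyi, smul_zero, smul_zero, add_zero]
  one_mem' := .of_forall fun i ↦ (D i).map_one_eq_zero
  add_mem' hx hy := by
    filter_upwards [hx, hy] with i hxi hyi
    rw [map_add, hxi, hyi, add_zero]
  zero_mem' := .of_forall fun i ↦ map_zero (D i)
  neg_mem' hx := by
    filter_upwards [hx] with i hxi
    rw [map_neg, hxi, neg_zero]
  inv_mem' x hx := by
    filter_upwards [hx] with i hxi
    rw [Derivation.leibniz_inv, hxi, smul_zero]

lemma mem_eventualConstants {D : ι → Derivation k E E} {l : Filter ι} {x : E} :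
    x ∈ eventualConstants D l ↔ ∀ᶠ i in l, D i x = 0 :=
  Iff.rfl

lemma pow_char_mem_eventualConstants (p : ℕ) [CharP E p] (D : ι → Derivation k E E)
    (l : Filter ι) (x : E) : x ^ p ∈ eventualConstants D l :=
  .of_forall fun i ↦ by
    rw [Derivation.leibniz_pow, ← Nat.cast_smul_eq_nsmul E, CharP.cast_eq_zero, zero_smul]

end Constants

lemma artinSchreierNorms_pow_char {E : Type*} [NormedField E] {p : ℕ} [Fact p.Prime] [CharP E p]
    {F : Subfield E} {w : E} (hw : w ^ p ∈ F) (hone : ∀ g ∈ F, 1 < ‖w - g‖)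
    (hlt : ∀ g ∈ F, ‖w‖ < ‖w - g‖ ^ p) :
    artinSchreierNorms p (⟨w ^ p, hw⟩ : F) = Set.range fun g : F ↦ ‖w - g‖ ^ p := by
  refine congrArg Set.range (funext fun g ↦ ?_)
  refine norm_sub_artinSchreier (f := w ^ p) (w := w) (g := (g : E)) (hone g g.2) ?_
  rw [artinSchreier, sub_sub_cancel]
  exact hlt g g.2

section Construction

/-- The exponents of the Hahn series used in the construction. Only the real coordinate is seen by
the norm; the integral coordinates label infinitesimal directions. -/
abbrev ExponentGroup : Type := ℝ ×ₗ Lex (ℕ → ℤ)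

namespace ExponentGroup

/-- The exponent with real coordinate `r` in the `k`-th infinitesimal direction. -/
noncomputable def direction (r : ℝ) (k : ℕ) : ExponentGroup := toLex (r, toLex (Pi.single k 1))

/-- The reduction modulo `p` of the `k`-th integral coordinate. -/
def character (p k : ℕ) : ExponentGroup →+ ZMod p where
  toFun g := ofLex (ofLex g).2 k
  map_zero' := Int.cast_zero
  map_add' _ _ := Int.cast_add _ _

lemma character_direction_self (p k : ℕ) (r : ℝ) : character p k (direction r k) = 1 := by
  simp [character, direction]

lemma character_direction_of_ne (p : ℕ) {i k : ℕ} (hik : i ≠ k) (r : ℝ) :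
    character p i (direction r k) = 0 := by
  simp [character, direction, hik]

lemma character_toLex_zero (p k : ℕ) (r : ℝ) : character p k (toLex (r, 0)) = 0 :=
  Int.cast_zero

lemma direction_lt_direction {r s : ℝ} (hrs : r < s) (i k : ℕ) : direction r i < direction s k :=
  Prod.Lex.toLex_lt_toLex.2 (.inl hrs)

end ExponentGroup

open ExponentGroup

variable (p : ℕ) [hp : Fact p.Prime]

noncomputable instance : NormedField (HahnSeries ExponentGroup (ZMod p)) :=
  (hahnAbsoluteValue (OrderAddMonoidHom.fstₗ ℝ (Lex (ℕ → ℤ)))).toNormedField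

instance : CharP (HahnSeries ExponentGroup (ZMod p)) p :=
  charP_of_injective_ringHom (HahnSeries.C_injective (Γ := ExponentGroup) (R := ZMod p)) p

/-- The series killed by the Euler operators of index `0` and of almost all other indices. -/
noncomputable def baseField : Subfield (HahnSeries ExponentGroup (ZMod p)) :=
  eventualConstants (fun k ↦ eulerDerivation (character p k)) (Filter.atTop ⊔ pure 0)

variable {p}

lemma norm_single_one (g : ExponentGroup) :
    ‖HahnSeries.single g (1 : ZMod p)‖ = Real.exp (-(ofLex g).1) :=
  hahnAbsoluteValue_single _ one_ne_zero

variable {x : HahnSeries ExponentGroup (ZMod p)} {g : ExponentGroup}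

lemma exp_le_norm (hg : x.coeff g ≠ 0) : Real.exp (-(ofLex g).1) ≤ ‖x‖ :=
  exp_le_hahnAbsoluteValue (.fstₗ ℝ (Lex (ℕ → ℤ))) hg

lemma norm_le_exp (hg : ∀ i < g, x.coeff i = 0) : ‖x‖ ≤ Real.exp (-(ofLex g).1) :=
  hahnAbsoluteValue_le_exp (.fstₗ ℝ (Lex (ℕ → ℤ))) hg

lemma mem_baseField :
    x ∈ baseField p ↔ (∀ᶠ k in Filter.atTop, ∀ g, x.coeff g ≠ 0 → character p k g = 0) ∧
      ∀ g, x.coeff g ≠ 0 → character p 0 g = 0 := by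
  simp only [baseField, mem_eventualConstants, eulerDerivation_eq_zero_iff, Filter.eventually_sup,
    Filter.eventually_pure]

lemma single_toLex_zero_mem_baseField (r : ℝ) :
    HahnSeries.single (toLex (r, 0)) 1 ∈ baseField p := by
  have hconst (k : ℕ) (g : ExponentGroup)
      (hg : (HahnSeries.single (toLex (r, 0)) (1 : ZMod p)).coeff g ≠ 0) : character p k g = 0 := by
    obtain rfl := HahnSeries.eq_of_mem_support_single hg
    exact character_toLex_zero p k r
  exact mem_baseField.2 ⟨.of_forall hconst, hconst 0⟩

variable (p) in
lemma exists_norm_baseField_eq {r : ℝ} (hr : 0 < r) : ∃ x : baseField p, ‖x‖ = r := by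
  refine ⟨⟨_, single_toLex_zero_mem_baseField (-Real.log r)⟩, (norm_single_one _).trans ?_⟩
  rw [ofLex_toLex, neg_neg, Real.exp_log hr]

/-- A series of norm `e`, whose distance to the base field is attained. -/
noncomputable def attainedSeries (p : ℕ) : HahnSeries ExponentGroup (ZMod p) :=
  HahnSeries.single (direction (-1) 0) 1

lemma norm_attainedSeries : ‖attainedSeries p‖ = Real.exp 1 :=
  (norm_single_one _).trans (congrArg Real.exp (neg_neg 1))

lemma exp_one_le_norm_attainedSeries_sub (hx : x ∈ baseField p) :
    Real.exp 1 ≤ ‖attainedSeries p - x‖ := by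
  have hcoeff : x.coeff (direction (-1) 0) = 0 := by
    by_contra hne
    exact one_ne_zero (((character_direction_self p 0 (-1)).symm).trans
      ((mem_baseField.1 hx).2 _ hne))
  have hle := exp_le_norm (x := attainedSeries p - x) (g := direction (-1) 0) (by
    rw [HahnSeries.coeff_sub, hcoeff, attainedSeries, HahnSeries.coeff_single_same, sub_zero]
    exact one_ne_zero)
  rwa [direction, ofLex_toLex, neg_neg] at hle

variable (p) in
theorem exists_isLeast_artinSchreierNorms :
    ∃ f : baseField p, IsLeast (artinSchreierNorms p f) (Real.exp 1 ^ p) := by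
  have hpow : attainedSeries p ^ p ∈ baseField p := pow_char_mem_eventualConstants p _ _ _
  have hdist (g : HahnSeries ExponentGroup (ZMod p)) (hg : g ∈ baseField p) :
      Real.exp 1 ^ p ≤ ‖attainedSeries p - g‖ ^ p :=
    pow_le_pow_left₀ (Real.exp_pos 1).le (exp_one_le_norm_attainedSeries_sub hg) p
  have hone : 1 < Real.exp 1 := Real.one_lt_exp_iff.2 one_pos
  refine ⟨⟨_, hpow⟩, ?_⟩
  rw [artinSchreierNorms_pow_char hpow
    (fun g hg ↦ hone.trans_le (exp_one_le_norm_attainedSeries_sub hg))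
    (fun g hg ↦ norm_attainedSeries.trans_lt
      ((lt_self_pow₀ hone hp.out.one_lt).trans_le (hdist g hg)))]
  refine ⟨⟨0, ?_⟩, ?_⟩
  · simp only [ZeroMemClass.coe_zero, sub_zero, norm_attainedSeries]
  · rintro _ ⟨g, rfl⟩
    exact hdist g g.2

/-- The exponent `-(1 + 1 / (n + 1))` in the direction `n + 1`. -/
noncomputable def limitExponent (n : ℕ) : ExponentGroup :=
  direction (-(1 + 1 / (n + 1))) (n + 1)

lemma strictMono_limitExponent : StrictMono limitExponent := fun m n hmn ↦ by
  refine direction_lt_direction ?_ _ _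
  gcongr

/-- The series `∑ t ^ (limitExponent n)`, whose distance to the base field is not attained. -/
noncomputable def limitSeries (p : ℕ) : HahnSeries ExponentGroup (ZMod p) :=
  HahnSeries.embDomain (OrderEmbedding.ofStrictMono limitExponent strictMono_limitExponent)
    (HahnSeries.toPowerSeries.symm (PowerSeries.mk 1))

lemma coeff_limitSeries (n : ℕ) : (limitSeries p).coeff (limitExponent n) = 1 := by
  refine HahnSeries.embDomain_coeff.trans ?_
  rw [HahnSeries.coeff_toPowerSeries_symm, PowerSeries.coeff_mk, Pi.one_apply]

lemma exists_limitExponent_eq (hg : (limitSeries p).coeff g ≠ 0) : ∃ n, limitExponent n = g := by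
  contrapose! hg
  refine HahnSeries.embDomain_of_notMem_range ?_
  rintro ⟨n, hn⟩
  exact hg n hn

lemma exp_one_lt_norm_limitSeries_sub (hx : x ∈ baseField p) :
    Real.exp 1 < ‖limitSeries p - x‖ := by
  obtain ⟨k, hk, hk1⟩ := ((mem_baseField.1 hx).1.and (Filter.eventually_ge_atTop 1)).exists
  obtain ⟨n, rfl⟩ := Nat.exists_eq_add_of_le' hk1
  have hcoeff : x.coeff (limitExponent n) = 0 := by
    by_contra hne
    exact one_ne_zero ((character_direction_self p (n + 1) _).symm.trans (hk _ hne))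
  refine lt_of_lt_of_le ?_ (exp_le_norm (g := limitExponent n) ?_)
  · rw [limitExponent, direction, ofLex_toLex, neg_neg, Real.exp_lt_exp]
    exact lt_add_of_pos_right 1 Nat.one_div_pos_of_nat
  · rw [HahnSeries.coeff_sub, hcoeff, coeff_limitSeries, sub_zero]
    exact one_ne_zero

lemma truncLT_limitSeries_mem_baseField (n : ℕ) :
    HahnSeries.truncLT (limitExponent n) (limitSeries p) ∈ baseField p := by
  have hsupp (g : ExponentGroup)
      (hg : (HahnSeries.truncLT (limitExponent n) (limitSeries p)).coeff g ≠ 0) :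
      ∃ m < n, limitExponent m = g := by
    rw [HahnSeries.coeff_truncLT, ite_ne_right_iff] at hg
    obtain ⟨m, rfl⟩ := exists_limitExponent_eq hg.2
    exact ⟨m, strictMono_limitExponent.lt_iff_lt.1 hg.1, rfl⟩
  refine mem_baseField.2 ⟨?_, fun g hg ↦ ?_⟩
  · filter_upwards [Filter.eventually_gt_atTop n] with k hk g hg
    obtain ⟨m, hm, rfl⟩ := hsupp g hg
    exact character_direction_of_ne p (by lia) _
  · obtain ⟨m, -, rfl⟩ := hsupp g hg
    exact character_direction_of_ne p (by lia) _

lemma norm_limitSeries_sub_truncLT_le (n : ℕ) :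
    ‖limitSeries p - HahnSeries.truncLT (limitExponent n) (limitSeries p)‖ ≤
      Real.exp (1 + 1 / (n + 1)) := by
  refine (norm_le_exp (g := limitExponent n) fun i hi ↦ ?_).trans_eq ?_
  · rw [HahnSeries.coeff_sub, HahnSeries.coeff_truncLT_of_lt hi, sub_self]
  · rw [limitExponent, direction, ofLex_toLex, neg_neg]

lemma norm_limitSeries_le : ‖limitSeries p‖ ≤ Real.exp 1 ^ 2 := by
  have hle := norm_le_exp (x := limitSeries p) (g := limitExponent 0) fun i hi ↦ by
    by_contra hne
    obtain ⟨n, rfl⟩ := exists_limitExponent_eq hne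
    exact Nat.not_lt_zero n (strictMono_limitExponent.lt_iff_lt.1 hi)
  refine hle.trans_eq ?_
  rw [limitExponent, direction, ofLex_toLex, neg_neg, ← Real.exp_nat_mul]
  norm_num

variable (p) in
theorem exists_isGLB_artinSchreierNorms :
    ∃ f : baseField p, IsGLB (artinSchreierNorms p f) (Real.exp 1 ^ p) ∧
      Real.exp 1 ^ p ∉ artinSchreierNorms p f := by
  have hpow : limitSeries p ^ p ∈ baseField p := pow_char_mem_eventualConstants p _ _ _
  have hdist (g : HahnSeries ExponentGroup (ZMod p)) (hg : g ∈ baseField p) :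
      Real.exp 1 ^ p < ‖limitSeries p - g‖ ^ p :=
    pow_lt_pow_left₀ (exp_one_lt_norm_limitSeries_sub hg) (Real.exp_pos 1).le hp.out.ne_zero
  have hone : 1 < Real.exp 1 := Real.one_lt_exp_iff.2 one_pos
  refine ⟨⟨_, hpow⟩, ?_⟩
  rw [artinSchreierNorms_pow_char hpow
    (fun g hg ↦ hone.trans (exp_one_lt_norm_limitSeries_sub hg))
    (fun g hg ↦ norm_limitSeries_le.trans_lt
      ((pow_le_pow_right₀ hone.le hp.out.two_le).trans_lt (hdist g hg)))]
  refine ⟨⟨?_, fun r hr ↦ ?_⟩, ?_⟩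
  · rintro _ ⟨g, rfl⟩
    exact (hdist g g.2).le
  · have hlim : Filter.Tendsto (fun n : ℕ ↦ Real.exp (1 + 1 / (n + 1)) ^ p) Filter.atTop
        (nhds (Real.exp (1 + 0) ^ p)) :=
      ((Real.continuous_exp.tendsto _).comp
        (tendsto_one_div_add_atTop_nhds_zero_nat.const_add 1)).pow p
    rw [add_zero] at hlim
    refine ge_of_tendsto' hlim fun n ↦ (hr ⟨⟨_, truncLT_limitSeries_mem_baseField n⟩, rfl⟩).trans ?_
    exact pow_le_pow_left₀ (norm_nonneg _) (norm_limitSeries_sub_truncLT_le n) p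
  · rintro ⟨g, hg⟩
    exact (hdist g g.2).ne' hg

end Construction

section CompletedField

variable (p : ℕ) [hp : Fact p.Prime]

instance : CharP (baseField p) p := (baseField p).subtype.charP Subtype.val_injective p

/-- The completion of the base field, a complete field of value group `ℝ`. -/
abbrev CompletedField : Type := UniformSpace.Completion (baseField p)

instance : CharP (CompletedField p) p :=
  charP_of_injective_ringHom
    (UniformSpace.Completion.coeRingHom : baseField p →+* CompletedField p).injective p

instance : IsUltrametricDist (CompletedField p) := isUltrametricDist_of_charP (CompletedField p) p

lemma exists_norm_completedField_eq {r : ℝ} (hr : 0 < r) : ∃ x : CompletedField p, ‖x‖ = r := by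
  obtain ⟨x, hx⟩ := exists_norm_baseField_eq p hr
  exact ⟨x, (UniformSpace.Completion.norm_coe x).trans hx⟩

noncomputable instance : NontriviallyNormedField (CompletedField p) :=
  .ofNormNeOne (by
    obtain ⟨x, hx⟩ := exists_norm_completedField_eq p two_pos
    refine ⟨x, norm_ne_zero_iff.1 ?_, ?_⟩ <;> rw [hx] <;> norm_num)

lemma one_lt_exp_one_pow : 1 < Real.exp 1 ^ p :=
  one_lt_pow₀ (Real.one_lt_exp_iff.2 one_pos) hp.out.ne_zero

lemma exists_isLeast_artinSchreierNorms_completedField :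
    ∃ f : CompletedField p, IsLeast (artinSchreierNorms p f) (Real.exp 1 ^ p) := by
  obtain ⟨f, hf⟩ := exists_isLeast_artinSchreierNorms p
  refine ⟨f, ?_⟩
  rwa [artinSchreierNorms_coe_completion fun r hr ↦ (one_lt_exp_one_pow p).trans_le (hf.2 hr)]

lemma exists_isGLB_artinSchreierNorms_completedField :
    ∃ f : CompletedField p, IsGLB (artinSchreierNorms p f) (Real.exp 1 ^ p) ∧
      Real.exp 1 ^ p ∉ artinSchreierNorms p f := by
  obtain ⟨f, hf⟩ := exists_isGLB_artinSchreierNorms p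
  refine ⟨f, ?_⟩
  rwa [artinSchreierNorms_coe_completion fun r hr ↦ (one_lt_exp_one_pow p).trans_le (hf.1.1 hr)]

lemma exists_mem_maximalIdeal_norm_pow_inv_eq :
    ∃ b ∈ IsLocalRing.maximalIdeal (normValuationSubring (CompletedField p)),
      b ≠ 0 ∧ ‖((b ^ p : normValuationSubring _) : CompletedField p)‖⁻¹ = Real.exp 1 ^ p := by
  obtain ⟨x, hx⟩ := exists_norm_completedField_eq p (Real.exp_pos (-1))
  have hlt : ‖x‖ < 1 := hx.trans_lt (Real.exp_lt_one_iff.2 neg_one_lt_zero)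
  refine ⟨⟨x, hlt.le⟩, mem_maximalIdeal_normValuationSubring.2 hlt, fun h ↦ ?_, ?_⟩
  · exact (Real.exp_pos (-1)).ne' (hx.symm.trans (norm_eq_zero.2 (congrArg Subtype.val h)))
  · rw [SubmonoidClass.coe_pow, norm_pow, hx, ← inv_pow, Real.exp_neg, inv_inv]

end CompletedField

/-- For every prime `p` there are a field `K` of characteristic `p`, a Henselian valuation
ring `A` with fraction field `K` which is not a field and whose value group `Kˣ/Aˣ` is
isomorphic to a nonzero subgroup of `ℝ` not isomorphic to `ℤ`, a nonzero element `b` of the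
maximal ideal of `A`, and cyclic Galois extensions `L₁`, `L₂` of `K` of degree `p` such that
the ideal of `A` associated to `L₁/K` is the principal ideal `b^p·A` and the ideal of `A`
associated to `L₂/K` is the (non-principal) ideal `b^p·m_A`. -/
theorem exists_assoc_ideals_principal_and_nonprincipal (p : ℕ) (hp : p.Prime) :
    ∃ (K : Type) (_ : Field K) (_ : CharP K p) (A : ValuationSubring K)
      (_ : HenselianLocalRing ↥A),
      ¬IsField ↥A ∧
      (∃ Γ : AddSubgroup ℝ, Γ ≠ ⊥ ∧ ¬Nonempty (↥Γ ≃+ ℤ) ∧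
        Nonempty ((Kˣ ⧸ A.unitGroup) ≃* Multiplicative ↥Γ)) ∧
      ∃ b : ↥A, b ≠ 0 ∧ b ∈ IsLocalRing.maximalIdeal ↥A ∧
        ∃ (L₁ : Type) (_ : Field L₁) (_ : Algebra K L₁)
          (L₂ : Type) (_ : Field L₂) (_ : Algebra K L₂),
          IsCyclicOfDegree K L₁ p ∧ IsCyclicOfDegree K L₂ p ∧
          (∀ H₁ : Ideal ↥A, IsAssociatedIdeal A L₁ H₁ →
            H₁ = Ideal.span {b ^ p}) ∧
          (∀ H₂ : Ideal ↥A, IsAssociatedIdeal A L₂ H₂ →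
            H₂ = Ideal.span {b ^ p} * IsLocalRing.maximalIdeal ↥A) := by
  have : Fact p.Prime := ⟨hp⟩
  obtain ⟨b, hb, hb0, hbp⟩ := exists_mem_maximalIdeal_norm_pow_inv_eq p
  have hbp0 : b ^ p ≠ 0 := pow_ne_zero p hb0
  have hbpm : b ^ p ∈ IsLocalRing.maximalIdeal _ := Ideal.pow_mem_of_mem _ hb p hp.pos
  obtain ⟨f₁, hf₁⟩ := exists_isLeast_artinSchreierNorms_completedField p
  obtain ⟨f₂, hf₂, hf₂'⟩ := exists_isGLB_artinSchreierNorms_completedField p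
  rw [← hbp] at hf₁ hf₂ hf₂'
  obtain ⟨L₁, _, _, hL₁, hH₁⟩ := exists_associatedIdeal_eq_span hbp0 hbpm hf₁
  obtain ⟨L₂, _, _, hL₂, hH₂⟩ := exists_associatedIdeal_eq_span_mul_maximalIdeal hbp0 hbpm hf₂ hf₂'
  refine ⟨CompletedField p, inferInstance, inferInstance, normValuationSubring _, inferInstance,
    fun hA ↦ ?_, ⟨⊤, top_ne_bot, not_nonempty_iff.2 (isEmpty_addEquiv_int_of_divisible fun x ↦ ?_),
      nonempty_quotient_unitGroup_mulEquiv fun r ↦ exists_norm_completedField_eq p⟩,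
    b, hb0, hb, L₁, _, _, L₂, _, _, hL₁, hL₂, hH₁, hH₂⟩
  · rw [IsLocalRing.isField_iff_maximalIdeal_eq.1 hA] at hb
    exact hb0 hb
  · exact ⟨⟨x / 2, trivial⟩, Subtype.ext (add_halves (x : ℝ))⟩
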